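/- Let Y be a pure simplicial complex, Y₀ ⊆ V(Y), and let ≺ be a total order on V(Y) inducing a star decomposition of (sd Y, Y₀) in vertices. Assume st(Y₀, sd Y) has trivial reduced homology. Then for every y ∈ Y₀ other than the ≺-largest element of V(Y), the complex st(V(lk({y},Y))_{≻y}, sd lk({y},Y)) also has trivial reduced homology. -/

import Mathlib

/-! Common definitions: finite abstract simplicial complexes, links, stars,
barycentric subdivision, joins, collapsibility, shellability, vertex
decomposability, star decomposability (also "in vertices"), and simplicial
homology (reduced, over ℤ and ℤ₂). -/

namespace Paper

open Finset

variable {V : Type*} [DecidableEq V]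

/-- `K` is a (finite, abstract) simplicial complex: downward closed family of finsets. -/
def IsCplx (K : Finset (Finset V)) : Prop :=
  ∀ σ ∈ K, ∀ τ ⊆ σ, τ ∈ K

/-- Vertex set of a complex. -/
def verts (K : Finset (Finset V)) : Finset V := K.sup id

/-- Dimension of a complex (as an integer; `-1` for `∅` and `{∅}`). -/
def dim (K : Finset (Finset V)) : ℤ := ((K.sup Finset.card : ℕ) : ℤ) - 1

/-- The facets (inclusion-maximal faces) of `K`. -/
def facets (K : Finset (Finset V)) : Finset (Finset V) :=
  K.filter fun σ => ∀ τ ∈ K, σ ⊆ τ → σ = τ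

/-- `K` is pure `d`-dimensional: it is nonempty, every face has dimension at most `d`
and every face is contained in a face of dimension exactly `d`. -/
def PureDim (K : Finset (Finset V)) (d : ℤ) : Prop :=
  K.Nonempty ∧ (∀ σ ∈ K, (σ.card : ℤ) ≤ d + 1) ∧
    ∀ σ ∈ K, ∃ τ ∈ K, σ ⊆ τ ∧ (τ.card : ℤ) = d + 1

/-- Link of a face. -/
def lk (σ : Finset V) (K : Finset (Finset V)) : Finset (Finset V) :=
  (K.filter fun τ => σ ⊆ τ).image fun τ => τ \ σ

/-- Closed star of a face. -/
def star (σ : Finset V) (K : Finset (Finset V)) : Finset (Finset V) :=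
  K.filter fun τ => τ ∪ σ ∈ K

/-- Union of the closed stars of a set of vertices. -/
def starSet (S : Finset V) (K : Finset (Finset V)) : Finset (Finset V) :=
  K.filter fun τ => ∃ v ∈ S, τ ∪ {v} ∈ K

/-- Subcomplex induced on a vertex set `S`. -/
def induced (S : Finset V) (K : Finset (Finset V)) : Finset (Finset V) :=
  K.filter fun σ => σ ⊆ S

/-- Deletion of a vertex:  `K - v`. -/
def deleteV (v : V) (K : Finset (Finset V)) : Finset (Finset V) :=
  K.filter fun σ => v ∉ σ

/-- The full simplex on vertex set `σ`. -/
def simplexCplx (σ : Finset V) : Finset (Finset V) := σ.powerset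

/-- The boundary `∂σ` of the simplex on `σ`: all proper subsets of `σ`. -/
def bdSimplex (σ : Finset V) : Finset (Finset V) := σ.powerset.erase σ

/-- Barycentric subdivision: vertices are the nonempty faces of `K`, faces are
chains of nonempty faces of `K`. -/
def sd (K : Finset (Finset V)) : Finset (Finset (Finset V)) :=
  if K = ∅ then ∅ else
    K.powerset.filter fun c => (∅ ∉ c) ∧ ∀ σ ∈ c, ∀ τ ∈ c, σ ⊆ τ ∨ τ ⊆ σ

/-- Join of two simplicial complexes (on the disjoint union of vertex types). -/
def join {α β : Type*} [DecidableEq α] [DecidableEq β]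
    (X : Finset (Finset α)) (Y : Finset (Finset β)) : Finset (Finset (α ⊕ β)) :=
  (X ×ˢ Y).image fun p => p.1.image Sum.inl ∪ p.2.image Sum.inr

/-- `K'` arises from `K` by an elementary collapse: remove a free face `σ`
together with the unique face `τ` properly containing it. -/
def ElemCollapse (K K' : Finset (Finset V)) : Prop :=
  ∃ σ ∈ K, ∃ τ ∈ K, σ ⊂ τ ∧ (∀ ρ ∈ K, σ ⊂ ρ → ρ = τ) ∧ K' = (K.erase σ).erase τ

/-- `K` collapses to `K'`. -/
def CollapsesTo (K K' : Finset (Finset V)) : Prop :=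
  Relation.ReflTransGen ElemCollapse K K'

/-- `K` is collapsible: it collapses to a single vertex. -/
def Collapsible (K : Finset (Finset V)) : Prop :=
  ∃ w : V, CollapsesTo K ({∅, {w}} : Finset (Finset V))

/-- The removal-collapsibility condition: `K` is empty, or becomes collapsible
after removal of a set of facets. -/
def RC (K : Finset (Finset V)) : Prop :=
  K = ∅ ∨ ∃ F ⊆ facets K, Collapsible (K \ F)

/-- The hereditary removal-collapsibility condition: the link of every face
(including the empty face, whose link is `K` itself) satisfies (RC). -/
def HRC (K : Finset (Finset V)) : Prop :=
  ∀ σ ∈ K, RC (lk σ K)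

/-- `K` is shellable: there is a total order of its facets such that each facet
meets the union of the previous ones in a pure complex of codimension one. -/
def Shellable (K : Finset (Finset V)) : Prop :=
  ∃ L : List (Finset V), L.Nodup ∧ L.toFinset = facets K ∧
    ∀ i : ℕ, (hi : i < L.length) → 1 ≤ i →
      PureDim ((L.get ⟨i, hi⟩).powerset ∩ ((L.take i).map Finset.powerset).foldr (· ∪ ·) ∅)
        (((L.get ⟨i, hi⟩).card : ℤ) - 2)

/-- Vertex decomposability (Provan–Billera) of a pure complex. -/
inductive VD : Finset (Finset V) → Prop
  | simplex (σ : Finset V) : VD σ.powerset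
  | shed (K : Finset (Finset V)) (v : V) (hv : {v} ∈ K)
      (hdel : PureDim (deleteV v K) (dim K)) (hVDdel : VD (deleteV v K))
      (hlk : PureDim (lk {v} K) (dim K - 1)) (hVDlk : VD (lk {v} K)) : VD K

/-- `L` is a shedding order of `K` (a total order on `V(K)`, given as a
duplicate-free list, witnessing vertex decomposability; once a simplex is
reached, an arbitrary order of its vertices qualifies). -/
inductive SheddingOrder : List V → Finset (Finset V) → Prop
  | simplex (σ : Finset V) (L : List V) (hnd : L.Nodup) (hfin : L.toFinset = σ) :
      SheddingOrder L σ.powerset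
  | cons (v : V) (L : List V) (K : Finset (Finset V)) (hv : {v} ∈ K) (hvL : v ∉ L)
      (hcov : insert v L.toFinset = verts K)
      (hdel : PureDim (deleteV v K) (dim K))
      (hrest : SheddingOrder L (deleteV v K))
      (hlk : PureDim (lk {v} K) (dim K - 1)) (hVDlk : VD (lk {v} K)) :
      SheddingOrder (v :: L) K

/-- `W` induces a star partition of `X`: the stars of the vertices of `W`
cover `X` and no two distinct vertices of `W` lie in a common face. -/
def StarPartition (W : Finset V) (X : Finset (Finset V)) : Prop :=
  (∀ σ ∈ X, ∃ w ∈ W, σ ∪ {w} ∈ X) ∧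
    ∀ w₁ ∈ W, ∀ w₂ ∈ W, w₁ ≠ w₂ → ¬∃ σ ∈ X, w₁ ∈ σ ∧ w₂ ∈ σ

/-- The overlap `O_X(x, W') = lk(x,X) ∩ st(W',X)`. -/
def overlap (X : Finset (Finset V)) (x : V) (W' : Finset V) : Finset (Finset V) :=
  lk {x} X ∩ starSet W' X

/-- Star decomposability of the pair `(X, X₀)`.  The total order on the set `W`
inducing the star partition is encoded as a duplicate-free list `L` (earlier in
the list = smaller in the order). -/
inductive StarDec : Finset (Finset V) → Finset V → Prop
  | base : StarDec ({∅} : Finset (Finset V)) (∅ : Finset V)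
  | step (X : Finset (Finset V)) (X₀ : Finset V) (k : ℤ) (hk : 0 ≤ k) (hpure : PureDim X k)
      (L : List V) (hne : L ≠ []) (hnd : L.Nodup) (hsub : L.toFinset ⊆ verts X)
      (hsp : StarPartition L.toFinset X)
      (horder : ∃ i < L.length, X₀ = (L.drop i).toFinset)
      (U : ℕ → Finset V)
      (hUne : ∀ i, i + 1 < L.length → (U i).Nonempty)
      (hUsub : ∀ i, (hi : i + 1 < L.length) →
        U i ⊆ verts (lk {L.get ⟨i, Nat.lt_of_succ_lt hi⟩} X))
      (hUst : ∀ i, (hi : i + 1 < L.length) →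
        starSet (U i) (lk {L.get ⟨i, Nat.lt_of_succ_lt hi⟩} X) =
          overlap X (L.get ⟨i, Nat.lt_of_succ_lt hi⟩) ((L.drop (i + 1)).toFinset))
      (hlink : ∀ i, (hi : i + 1 < L.length) →
        StarDec (lk {L.get ⟨i, Nat.lt_of_succ_lt hi⟩} X) (U i))
      (Ulast : Finset V)
      (hlast : StarDec (lk {L.getLast hne} X) Ulast) :
      StarDec X X₀

/-- The order encoded by the list `L` induces a star decomposition of `(X, X₀)`. -/
def InducesStarDecomp (L : List V) (X : Finset (Finset V)) (X₀ : Finset V) : Prop :=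
  (L = [] ∧ X = ({∅} : Finset (Finset V)) ∧ X₀ = ∅) ∨
  ∃ hne : L ≠ [], L.Nodup ∧ StarPartition L.toFinset X ∧
    (∃ i < L.length, X₀ = (L.drop i).toFinset) ∧
    (∀ i, (hi : i + 1 < L.length) →
      ∃ U : Finset V, U.Nonempty ∧ U ⊆ verts (lk {L.get ⟨i, Nat.lt_of_succ_lt hi⟩} X) ∧
        starSet U (lk {L.get ⟨i, Nat.lt_of_succ_lt hi⟩} X) =
          overlap X (L.get ⟨i, Nat.lt_of_succ_lt hi⟩) ((L.drop (i + 1)).toFinset) ∧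
        StarDec (lk {L.get ⟨i, Nat.lt_of_succ_lt hi⟩} X) U) ∧
    (∃ U : Finset V, StarDec (lk {L.getLast hne} X) U)

/-- Star decomposability *in vertices* of the pair `(sd Y, Y₀)`; the data is the
underlying complex `Y` together with `Y₀ ⊆ V(Y)`.  The total order on `V(Y)` is
encoded as a duplicate-free list `L`. -/
inductive StarDecV : Finset (Finset V) → Finset V → Prop
  | base : StarDecV ({∅} : Finset (Finset V)) (∅ : Finset V)
  | step (Y : Finset (Finset V)) (Y₀ : Finset V) (k : ℤ) (hk : 0 ≤ k) (hpure : PureDim Y k)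
      (L : List V) (hne : L ≠ []) (hnd : L.Nodup) (hV : L.toFinset = verts Y)
      (horder : ∃ i < L.length, Y₀ = (L.drop i).toFinset)
      (hlink : ∀ i, (hi : i + 1 < L.length) →
        StarDecV (lk {L.get ⟨i, Nat.lt_of_succ_lt hi⟩} Y)
          (verts (lk {L.get ⟨i, Nat.lt_of_succ_lt hi⟩} Y) ∩ (L.drop (i + 1)).toFinset))
      (hlast : StarDecV (lk {L.getLast hne} Y) (verts (lk {L.getLast hne} Y))) :
      StarDecV Y Y₀

/-- The order encoded by the list `L` induces a star decomposition of
`(sd Y, Y₀)` in vertices. -/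
def InducesStarDecompV (L : List V) (Y : Finset (Finset V)) (Y₀ : Finset V) : Prop :=
  (L = [] ∧ Y = ({∅} : Finset (Finset V)) ∧ Y₀ = ∅) ∨
  ∃ hne : L ≠ [], L.Nodup ∧ L.toFinset = verts Y ∧
    (∃ i < L.length, Y₀ = (L.drop i).toFinset) ∧
    (∀ i, (hi : i + 1 < L.length) →
      StarDecV (lk {L.get ⟨i, Nat.lt_of_succ_lt hi⟩} Y)
        (verts (lk {L.get ⟨i, Nat.lt_of_succ_lt hi⟩} Y) ∩ (L.drop (i + 1)).toFinset)) ∧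
    StarDecV (lk {L.getLast hne} Y) (verts (lk {L.getLast hne} Y))

/-- Simplicial isomorphism between two complexes. -/
def SimpIso {α β : Type*} [DecidableEq α] [DecidableEq β]
    (K : Finset (Finset α)) (L : Finset (Finset β)) : Prop :=
  ∃ f : α → β, Set.InjOn f ↑(verts K) ∧ K.image (fun σ => σ.image f) = L

/-- Simplicial isomorphism of pairs (complex, subcomplex). -/
def SimpIsoPair {α β : Type*} [DecidableEq α] [DecidableEq β]
    (K K₁ : Finset (Finset α)) (L L₁ : Finset (Finset β)) : Prop :=
  ∃ f : α → β, Set.InjOn f ↑(verts K) ∧ K.image (fun σ => σ.image f) = L ∧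
    K₁.image (fun σ => σ.image f) = L₁

/-! Reduced simplicial homology (the empty face is included, so the chain
complex below, graded by cardinality of faces, computes *reduced* homology). -/

/-- Faces of `K` of cardinality `n`. -/
def kfaces (K : Finset (Finset V)) (n : ℕ) : Finset (Finset V) :=
  K.filter fun σ => σ.card = n

/-- The mod 2 boundary operator, from chains on faces of cardinality `n+1`
to chains on faces of cardinality `n`. -/
noncomputable def bdry2 (K : Finset (Finset V)) (n : ℕ) :
    (↥(kfaces K (n + 1)) → ZMod 2) →ₗ[ZMod 2] (↥(kfaces K n) → ZMod 2) :=
  Matrix.mulVecLin (Matrix.of fun (τ : ↥(kfaces K n)) (σ : ↥(kfaces K (n + 1))) =>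
    if (τ : Finset V) ⊆ (σ : Finset V) then (1 : ZMod 2) else 0)

/-- The reduced Betti number `β̃ᵢ(K; ℤ₂)`. -/
noncomputable def betti2 (K : Finset (Finset V)) (i : ℕ) : ℕ :=
  Module.finrank (ZMod 2) (LinearMap.ker (bdry2 K i)) -
    Module.finrank (ZMod 2) (LinearMap.range (bdry2 K (i + 1)))

/-- Signed incidence coefficient (with respect to an arbitrary, but fixed,
linear order on the vertices; reduced homology does not depend on the choice). -/
noncomputable def coeffInt (σ τ : Finset V) : ℤ :=
  letI : LinearOrder V := IsWellOrder.linearOrder WellOrderingRel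
  (σ \ τ).sum fun v => (-1 : ℤ) ^ ((σ.filter fun u => u < v).card)

/-- The integral boundary operator, from chains on faces of cardinality `n+1`
to chains on faces of cardinality `n`. -/
noncomputable def bdryZ (K : Finset (Finset V)) (n : ℕ) :
    (↥(kfaces K (n + 1)) → ℤ) →ₗ[ℤ] (↥(kfaces K n) → ℤ) :=
  Matrix.mulVecLin (Matrix.of fun (τ : ↥(kfaces K n)) (σ : ↥(kfaces K (n + 1))) =>
    if (τ : Finset V) ⊆ (σ : Finset V) then coeffInt (σ : Finset V) (τ : Finset V) else 0)

/-- `K` has trivial reduced (integral) homology: `H̃ₙ(K; ℤ) = 0` for all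
`n ≥ -1`. -/
def TrivialRedHomology (K : Finset (Finset V)) : Prop :=
  K.Nonempty ∧ LinearMap.range (bdryZ K 0) = ⊤ ∧
    ∀ n : ℕ, LinearMap.ker (bdryZ K n) = LinearMap.range (bdryZ K (n + 1))

/-- Reduced Euler characteristic. -/
def redEuler (K : Finset (Finset V)) : ℤ :=
  (∑ σ ∈ K.filter fun σ => σ ≠ ∅, (-1 : ℤ) ^ (σ.card - 1)) - 1


/-! ### Chains as total functions, boundary with respect to a tournament -/

section Chains

set_option linter.unusedSectionVars false

variable {W : Type*} [DecidableEq W]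

/-- A sign function which is antisymmetric off the diagonal. -/
def Tour (s : W → W → ℤ) : Prop :=
  (∀ u v, s u v * s u v = 1) ∧ ∀ u v, u ≠ v → s u v = - s v u

/-- Incidence coefficient of `τ` in `insert v τ`. -/
def ct (s : W → W → ℤ) (τ : Finset W) (v : W) : ℤ := ∏ u ∈ τ, s u v

/-- Boundary operator. -/
def bd (s : W → W → ℤ) (U : Finset W) (f : Finset W → ℤ) (τ : Finset W) : ℤ :=
  ∑ v ∈ U \ τ, ct s τ v * f (insert v τ)

/-- `f` is an `n`-chain of `K`. -/
def Supp (K : Finset (Finset W)) (n : ℕ) (f : Finset W → ℤ) : Prop :=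
  ∀ σ, f σ ≠ 0 → σ ∈ K ∧ σ.card = n

/-- Vanishing of the homology of `K` in cardinality `n`. -/
def Ac (s : W → W → ℤ) (U : Finset W) (K : Finset (Finset W)) (n : ℕ) : Prop :=
  ∀ f, Supp K n f → (∀ τ, bd s U f τ = 0) →
    ∃ g, Supp K (n + 1) g ∧ ∀ τ, bd s U g τ = f τ

theorem ct_insert (s : W → W → ℤ) (τ : Finset W) (u v : W) (hu : u ∉ τ) :
    ct s (insert u τ) v = s u v * ct s τ v := by
  unfold ct; rw [Finset.prod_insert hu]

theorem ct_sq {s : W → W → ℤ} (hs : Tour s) (τ : Finset W) (v : W) :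
    ct s τ v * ct s τ v = 1 := by
  unfold ct; rw [← Finset.prod_mul_distrib]
  exact Finset.prod_eq_one fun u _ => hs.1 u v

theorem bd_add (s : W → W → ℤ) (U : Finset W) (f g : Finset W → ℤ) (τ : Finset W) :
    bd s U (fun σ => f σ + g σ) τ = bd s U f τ + bd s U g τ := by
  unfold bd; rw [← Finset.sum_add_distrib]
  exact Finset.sum_congr rfl fun _ _ => by ring

theorem bd_sub (s : W → W → ℤ) (U : Finset W) (f g : Finset W → ℤ) (τ : Finset W) :
    bd s U (fun σ => f σ - g σ) τ = bd s U f τ - bd s U g τ := by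
  unfold bd; rw [← Finset.sum_sub_distrib]
  exact Finset.sum_congr rfl fun _ _ => by ring

theorem bd_bd {s : W → W → ℤ} (hs : Tour s) (U : Finset W) (f : Finset W → ℤ)
    (τ : Finset W) : bd s U (bd s U f) τ = 0 := by
  have key : bd s U (bd s U f) τ = ∑ v ∈ U, ∑ u ∈ U,
      if v ∉ τ ∧ u ∉ τ ∧ u ≠ v then
        ct s τ v * ct s τ u * s v u * f (insert u (insert v τ)) else 0 := by
    unfold bd
    rw [Finset.sdiff_eq_filter, Finset.sum_filter]
    refine Finset.sum_congr rfl fun v _ => ?_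
    by_cases hv : v ∉ τ
    · rw [if_pos hv, Finset.sdiff_eq_filter, Finset.sum_filter, Finset.mul_sum]
      refine Finset.sum_congr rfl fun u _ => ?_
      by_cases h : u ∈ insert v τ
      · have : ¬ (v ∉ τ ∧ u ∉ τ ∧ u ≠ v) := by
          rw [Finset.mem_insert] at h; tauto
        rw [if_neg (not_not.2 h), if_neg this, mul_zero]
      · have : (v ∉ τ ∧ u ∉ τ ∧ u ≠ v) := by
          rw [Finset.mem_insert] at h; tauto
        rw [if_pos h, if_pos this, ct_insert _ _ _ _ hv]; ring
    · rw [if_neg hv]; symm; refine Finset.sum_eq_zero fun u _ => if_neg (by tauto)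
  have key2 : bd s U (bd s U f) τ = - bd s U (bd s U f) τ := by
    conv_lhs => rw [key, Finset.sum_comm]
    rw [key, ← Finset.sum_neg_distrib]
    refine Finset.sum_congr rfl fun v _ => ?_
    rw [← Finset.sum_neg_distrib]
    refine Finset.sum_congr rfl fun u _ => ?_
    by_cases h : v ∉ τ ∧ u ∉ τ ∧ u ≠ v
    · rw [if_pos h, if_pos ⟨h.2.1, h.1, h.2.2.symm⟩, hs.2 u v h.2.2, Finset.insert_comm]; ring
    · rw [if_neg h, if_neg (fun h' => h ⟨h'.2.1, h'.1, h'.2.2.symm⟩), neg_zero]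
  omega

theorem Supp.add {K : Finset (Finset W)} {n : ℕ} {f g : Finset W → ℤ}
    (hf : Supp K n f) (hg : Supp K n g) : Supp K n (fun σ => f σ + g σ) := by
  intro σ h
  by_cases h1 : f σ = 0
  · exact hg σ (by intro h2; apply h; simp [h1, h2])
  · exact hf σ h1

theorem Supp.sub {K : Finset (Finset W)} {n : ℕ} {f g : Finset W → ℤ}
    (hf : Supp K n f) (hg : Supp K n g) : Supp K n (fun σ => f σ - g σ) := by
  intro σ h
  by_cases h1 : f σ = 0
  · exact hg σ (by intro h2; apply h; simp [h1, h2])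
  · exact hf σ h1

theorem Supp.mono {K K' : Finset (Finset W)} (h : K ⊆ K') {n : ℕ} {f : Finset W → ℤ}
    (hf : Supp K n f) : Supp K' n f := fun σ hσ => ⟨h (hf σ hσ).1, (hf σ hσ).2⟩

theorem Supp.inter {K K' : Finset (Finset W)} {n : ℕ} {f : Finset W → ℤ}
    (hf : Supp K n f) (hf' : Supp K' n f) : Supp (K ∩ K') n f :=
  fun σ hσ => ⟨Finset.mem_inter.2 ⟨(hf σ hσ).1, (hf' σ hσ).1⟩, (hf σ hσ).2⟩

theorem Supp.bd {K : Finset (Finset W)} (hK : IsCplx K) {n : ℕ} {f : Finset W → ℤ}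
    (hf : Supp K (n + 1) f) (s : W → W → ℤ) (U : Finset W) : Supp K n (bd s U f) := by
  intro τ hτ
  obtain ⟨v, hv, h⟩ := Finset.exists_ne_zero_of_sum_ne_zero hτ
  obtain ⟨h1, h2⟩ := hf _ (right_ne_zero_of_mul h)
  refine ⟨hK _ h1 _ (Finset.subset_insert _ _), ?_⟩
  rw [Finset.card_insert_of_notMem (Finset.mem_sdiff.1 hv).2] at h2
  omega

theorem Supp.bd_zero {K : Finset (Finset W)} {f : Finset W → ℤ}
    (hf : Supp K 0 f) (s : W → W → ℤ) (U : Finset W) (τ : Finset W) :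
    Paper.bd s U f τ = 0 := by
  refine Finset.sum_eq_zero fun v hv => ?_
  by_contra h
  have := (hf _ (right_ne_zero_of_mul h)).2
  rw [Finset.card_insert_of_notMem (Finset.mem_sdiff.1 hv).2] at this
  omega

theorem Supp.split {A B : Finset (Finset W)} {n : ℕ} {f : Finset W → ℤ}
    (hf : Supp (A ∪ B) n f) : ∃ a b, Supp A n a ∧ Supp B n b ∧ f = fun σ => a σ + b σ := by
  refine ⟨fun σ => if σ ∈ A then f σ else 0, fun σ => if σ ∈ A then 0 else f σ, ?_, ?_, ?_⟩
  · intro σ h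
    by_cases hA : σ ∈ A
    · simp only [hA, if_true] at h; exact ⟨hA, (hf σ h).2⟩
    · simp [hA] at h
  · intro σ h
    by_cases hA : σ ∈ A
    · simp [hA] at h
    · simp only [hA, if_false] at h
      exact ⟨(Finset.mem_union.1 (hf σ h).1).resolve_left hA, (hf σ h).2⟩
  · funext σ; by_cases hA : σ ∈ A <;> simp [hA]

/-- Mayer–Vietoris, first part. -/
theorem mv1 {s : W → W → ℤ} (hs : Tour s) {U : Finset W} {A B : Finset (Finset W)}
    (hA : IsCplx A) (hB : IsCplx B) {n : ℕ} (h1 : Ac s U A n) (h2 : Ac s U B n)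
    (h3 : ∀ m, n = m + 1 → Ac s U (A ∩ B) m) : Ac s U (A ∪ B) n := by
  intro f hf hcyc
  obtain ⟨a, b, ha, hb, rfl⟩ := hf.split
  have hab : ∀ τ, bd s U a τ = - bd s U b τ := by
    intro τ; have := hcyc τ; rw [bd_add] at this; omega
  have : ∃ e, Supp (A ∩ B) n e ∧ ∀ τ, bd s U e τ = bd s U a τ := by
    cases n with
    | zero =>
      refine ⟨fun _ => 0, fun σ h => absurd rfl h, fun τ => ?_⟩
      rw [ha.bd_zero]; simp [bd]
    | succ m =>
      refine h3 m rfl (bd s U a) ?_ (bd_bd hs U a)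
      refine (ha.bd hA s U).inter ?_
      have := hb.bd hB s U
      intro σ hσ
      exact this σ (by intro h; apply hσ; rw [hab, h, neg_zero])
  obtain ⟨e, he, hea⟩ := this
  obtain ⟨g, hg, hga⟩ := h1 (fun σ => a σ - e σ) (ha.sub (he.mono Finset.inter_subset_left))
    (fun τ => by rw [bd_sub, hea, sub_self])
  obtain ⟨h, hh, hhb⟩ := h2 (fun σ => b σ + e σ) (hb.add (he.mono Finset.inter_subset_right))
    (fun τ => by rw [bd_add, hea, hab]; ring)
  refine ⟨fun σ => g σ + h σ, (hg.mono Finset.subset_union_left).add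
    (hh.mono Finset.subset_union_right), fun τ => ?_⟩
  rw [bd_add, hga, hhb]; ring

/-- Mayer–Vietoris, second part. -/
theorem mv2 {s : W → W → ℤ} (hs : Tour s) {U : Finset W} {A B : Finset (Finset W)}
    (hA : IsCplx A) (hB : IsCplx B) {n : ℕ} (h1 : Ac s U A n) (h2 : Ac s U B n)
    (h3 : Ac s U (A ∪ B) (n + 1)) : Ac s U (A ∩ B) n := by
  intro z hz hcyc
  obtain ⟨a, ha, haz⟩ := h1 z (hz.mono Finset.inter_subset_left) hcyc
  obtain ⟨b, hb, hbz⟩ := h2 z (hz.mono Finset.inter_subset_right) hcyc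
  obtain ⟨w, hw, hwab⟩ := h3 (fun σ => a σ - b σ)
    ((ha.mono Finset.subset_union_left).sub (hb.mono Finset.subset_union_right))
    (fun τ => by rw [bd_sub, haz, hbz, sub_self])
  obtain ⟨g, h, hg, hh, rfl⟩ := hw.split
  refine ⟨fun σ => a σ - bd s U g σ, ?_, fun τ => ?_⟩
  · refine (ha.sub (hg.bd hA s U)).inter ?_
    have := hb.add (hh.bd hB s U)
    intro σ hσ
    refine this σ ?_
    intro h0; apply hσ
    have := hwab σ
    rw [bd_add] at this
    simp only at h0 ⊢
    omega
  · rw [bd_sub, bd_bd hs, haz, sub_zero]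

/-- Mayer–Vietoris, third part. -/
theorem mv3 {s : W → W → ℤ} {U : Finset W} {A B : Finset (Finset W)}
    (hA : IsCplx A) (hB : IsCplx B) {n : ℕ} (h1 : ∀ σ ∈ A ∩ B, σ.card ≠ n)
    (h3 : Ac s U (A ∪ B) n) : Ac s U A n := by
  intro a ha hcyc
  obtain ⟨w, hw, hwab⟩ := h3 a (ha.mono Finset.subset_union_left) hcyc
  obtain ⟨g, h, hg, hh, rfl⟩ := hw.split
  refine ⟨g, hg, fun τ => ?_⟩
  have e := hwab τ
  rw [bd_add] at e
  have hO : bd s U h τ = 0 := by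
    by_contra h0
    have m1 := hh.bd hB s U τ h0
    have m2 := (ha.sub (hg.bd hA s U)) τ (by simp only; omega)
    exact h1 τ (Finset.mem_inter.2 ⟨m2.1, m1.1⟩) m1.2
  omega

/-- Cones are acyclic. -/
theorem ac_cone {s : W → W → ℤ} (hs : Tour s) {U : Finset W} {B : Finset (Finset W)} {v : W}
    (hv : v ∈ U) (hB : ∀ σ ∈ B, insert v σ ∈ B) (n : ℕ) : Ac s U B n := by
  intro f hf hcyc
  refine ⟨fun σ => if v ∈ σ then ct s (σ.erase v) v * f (σ.erase v) else 0, ?_, ?_⟩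
  · intro σ h
    by_cases hσ : v ∈ σ
    · simp only [hσ, if_true] at h
      obtain ⟨m, c⟩ := hf _ (right_ne_zero_of_mul h)
      have := hB _ m
      rw [Finset.insert_erase hσ] at this
      refine ⟨this, ?_⟩
      rw [Finset.card_erase_of_mem hσ] at c
      have := Finset.card_pos.2 ⟨v, hσ⟩
      omega
    · simp [hσ] at h
  · intro τ
    by_cases hτ : v ∈ τ
    · obtain ⟨ρ, hρ, rfl⟩ : ∃ ρ, v ∉ ρ ∧ τ = insert v ρ :=
        ⟨τ.erase v, Finset.notMem_erase _ _, (Finset.insert_erase hτ).symm⟩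
      have hc := hcyc ρ
      unfold bd at hc ⊢
      have hU : U \ ρ = insert v (U \ insert v ρ) := by
        ext x; simp only [Finset.mem_sdiff, Finset.mem_insert]
        constructor
        · rintro ⟨a, b⟩; by_cases x = v <;> tauto
        · rintro (rfl | h)
          · exact ⟨hv, hρ⟩
          · tauto
      rw [hU, Finset.sum_insert (by simp)] at hc
      have : ∀ u ∈ U \ insert v ρ, ct s (insert v ρ) u *
          (if v ∈ insert u (insert v ρ) then ct s ((insert u (insert v ρ)).erase v) v *
            f ((insert u (insert v ρ)).erase v) else 0)
          = - ct s ρ v * (ct s ρ u * f (insert u ρ)) := by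
        intro u hu
        simp only [Finset.mem_sdiff, Finset.mem_insert, not_or] at hu
        have e1 : (insert u (insert v ρ)).erase v = insert u ρ := by
          rw [Finset.insert_comm, Finset.erase_insert]
          simp only [Finset.mem_insert, not_or]; exact ⟨fun h => hu.2.1 h.symm, hρ⟩
        rw [if_pos (by simp), e1, ct_insert _ _ _ _ hρ, ct_insert _ _ _ _ hu.2.2]
        have h1 := hs.2 u v hu.2.1
        have h2 := hs.1 v u
        rw [h1]
        linear_combination (- ct s ρ u * ct s ρ v * f (insert u ρ)) * h2
      rw [Finset.sum_congr rfl this, ← Finset.mul_sum]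
      have h2 := ct_sq hs ρ v
      linear_combination (- ct s ρ v) * hc + f (insert v ρ) * h2
    · unfold bd
      rw [Finset.sum_eq_single_of_mem v (Finset.mem_sdiff.2 ⟨hv, hτ⟩)]
      · simp only
        rw [if_pos (Finset.mem_insert_self _ _), Finset.erase_insert hτ, ← mul_assoc,
          ct_sq hs, one_mul]
      · intro u _ huv
        simp only
        rw [if_neg, mul_zero]
        rw [Finset.mem_insert]; rintro (h | h)
        · exact huv h.symm
        · exact hτ h

theorem exists_eps (t : W → W → ℤ) (ht : ∀ u v, t u v = t v u)
    (ht1 : ∀ u v, t u v * t u v = 1) :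
    ∃ ε : Finset W → ℤ, (∀ σ, ε σ * ε σ = 1) ∧
      ∀ τ v, v ∉ τ → ε (insert v τ) = ε τ * ∏ u ∈ τ, t u v := by
  letI : LinearOrder W := IsWellOrder.linearOrder WellOrderingRel
  refine ⟨fun σ => ∏ w ∈ σ, ∏ u ∈ σ, if u < w then t u w else 1, ?_, ?_⟩
  · intro σ
    rw [← Finset.prod_mul_distrib]
    refine Finset.prod_eq_one fun w _ => ?_
    rw [← Finset.prod_mul_distrib]
    refine Finset.prod_eq_one fun u _ => ?_
    split_ifs
    · exact ht1 _ _
    · rfl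
  · intro τ v hv
    simp only
    rw [Finset.prod_insert hv, Finset.prod_insert hv, if_neg (lt_irrefl v), one_mul]
    have : ∀ w ∈ τ, (∏ u ∈ insert v τ, if u < w then t u w else 1) =
        (if v < w then t v w else 1) * ∏ u ∈ τ, if u < w then t u w else 1 :=
      fun w _ => Finset.prod_insert hv
    rw [Finset.prod_congr rfl this, Finset.prod_mul_distrib, ← mul_assoc,
      ← Finset.prod_mul_distrib, mul_comm]
    congr 1
    refine Finset.prod_congr rfl fun u hu => ?_
    have huv : u ≠ v := by rintro rfl; exact hv hu
    rcases lt_or_gt_of_ne huv with h | h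
    · rw [if_pos h, if_neg (not_lt_of_gt h), mul_one]
    · rw [if_pos h, if_neg (not_lt_of_gt h), one_mul, ht]

/-- Acyclicity does not depend on the signs. -/
theorem ac_change {s s' : W → W → ℤ} (hs : Tour s) (hs' : Tour s') {U : Finset W}
    {K : Finset (Finset W)} {n : ℕ} (h : Ac s U K n) : Ac s' U K n := by
  classical
  obtain ⟨ε, he1, he2⟩ := exists_eps (fun u v => if u = v then 1 else s u v * s' u v)
    (by
      intro u v
      by_cases huv : u = v
      · simp [huv]
      · rw [if_neg huv, if_neg (Ne.symm huv), hs.2 u v huv, hs'.2 u v huv]; ring)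
    (by
      intro u v
      by_cases huv : u = v
      · simp [huv]
      · rw [if_neg huv]
        linear_combination (s' u v * s' u v) * hs.1 u v + hs'.1 u v)
  have he3 : ∀ τ v, v ∉ τ → ε (insert v τ) = ε τ * (ct s τ v * ct s' τ v) := by
    intro τ v hv
    rw [he2 τ v hv]
    unfold ct
    rw [← Finset.prod_mul_distrib]
    congr 1
    refine Finset.prod_congr rfl fun u hu => ?_
    have huv : u ≠ v := by rintro rfl; exact hv hu
    rw [if_neg huv]
  have k1 : ∀ f τ, bd s U (fun σ => ε σ * f σ) τ = ε τ * bd s' U f τ := by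
    intro f τ
    unfold bd; rw [Finset.mul_sum]
    refine Finset.sum_congr rfl fun v hv => ?_
    simp only
    rw [he3 _ _ (Finset.mem_sdiff.1 hv).2]
    linear_combination (ε τ * ct s' τ v * f (insert v τ)) * ct_sq hs τ v
  have k2 : ∀ f τ, bd s' U (fun σ => ε σ * f σ) τ = ε τ * bd s U f τ := by
    intro f τ
    unfold bd; rw [Finset.mul_sum]
    refine Finset.sum_congr rfl fun v hv => ?_
    simp only
    rw [he3 _ _ (Finset.mem_sdiff.1 hv).2]
    linear_combination (ε τ * ct s τ v * f (insert v τ)) * ct_sq hs' τ v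
  intro f hf hc
  obtain ⟨g, hg, hgf⟩ := h (fun σ => ε σ * f σ)
    (fun σ hσ => hf σ (right_ne_zero_of_mul hσ)) (fun τ => by rw [k1, hc, mul_zero])
  refine ⟨fun σ => ε σ * g σ, fun σ hσ => hg σ (right_ne_zero_of_mul hσ), fun τ => ?_⟩
  rw [k2, hgf]
  linear_combination f τ * he1 τ

/-- Transport of acyclicity along a permutation of the vertices. -/
theorem ac_transport (e : W ≃ W) {s : W → W → ℤ} {U : Finset W} {K K' : Finset (Finset W)}
    (hK : ∀ c, c ∈ K ↔ c.map e.toEmbedding ∈ K') {n : ℕ}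
    (h : Ac (fun u v => s (e u) (e v)) U K n) : Ac s (U.map e.toEmbedding) K' n := by
  have k : ∀ f τ, bd s (U.map e.toEmbedding) f (τ.map e.toEmbedding) =
      bd (fun u v => s (e u) (e v)) U (fun σ => f (σ.map e.toEmbedding)) τ := by
    intro f τ
    unfold bd ct
    rw [← Finset.map_sdiff, Finset.sum_map]
    refine Finset.sum_congr rfl fun v _ => ?_
    simp only
    rw [Finset.prod_map, Finset.map_insert]
    rfl
  have r : ∀ τ : Finset W, ∃ ρ : Finset W, τ = ρ.map e.toEmbedding := by
    intro τ
    refine ⟨τ.map e.symm.toEmbedding, ?_⟩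
    ext x; simp
  intro f hf hc
  obtain ⟨g, hg, hgf⟩ := h (fun σ => f (σ.map e.toEmbedding))
    (fun σ hσ => by
      have := hf _ hσ
      rw [Finset.card_map] at this
      exact ⟨(hK σ).2 this.1, this.2⟩)
    (fun τ => by rw [← k, hc])
  have mm : ∀ σ : Finset W, (σ.map e.toEmbedding).map e.symm.toEmbedding = σ := by
    intro σ; ext x; simp
  refine ⟨fun σ => g (σ.map e.symm.toEmbedding), ?_, ?_⟩
  · intro σ hσ
    obtain ⟨ρ, rfl⟩ := r σ
    simp only [mm] at hσ
    have := hg _ hσ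
    rw [Finset.card_map]
    exact ⟨(hK ρ).1 this.1, this.2⟩
  · intro τ
    obtain ⟨ρ, rfl⟩ := r τ
    rw [k]
    simp only [mm]
    exact hgf ρ

/-- The standard signs. -/
noncomputable def stdSign (u v : W) : ℤ :=
  letI : LinearOrder W := IsWellOrder.linearOrder WellOrderingRel
  if u < v then -1 else 1

theorem tour_std : Tour (stdSign (W := W)) := by
  letI : LinearOrder W := IsWellOrder.linearOrder WellOrderingRel
  constructor
  · intro u v; unfold stdSign; split_ifs <;> norm_num
  · intro u v h
    unfold stdSign
    rcases lt_or_gt_of_ne h with h | h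
    · rw [if_pos h, if_neg (not_lt_of_gt h)]
    · rw [if_pos h, if_neg (not_lt_of_gt h), neg_neg]

theorem coeffInt_insert (τ : Finset W) (v : W) (hv : v ∉ τ) :
    coeffInt (insert v τ) τ = ct stdSign τ v := by
  letI : LinearOrder W := IsWellOrder.linearOrder WellOrderingRel
  have e : insert v τ \ τ = {v} := by
    ext x; simp only [Finset.mem_sdiff, Finset.mem_insert, Finset.mem_singleton]
    constructor
    · tauto
    · rintro rfl; exact ⟨Or.inl rfl, hv⟩
  unfold coeffInt ct stdSign
  rw [e, Finset.sum_singleton, Finset.prod_ite, Finset.prod_const, Finset.prod_const_one, mul_one,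
    Finset.filter_insert, if_neg (lt_irrefl v)]

/-- Extension by zero. -/
noncomputable def ext0 {S : Finset (Finset W)} (f : ↥S → ℤ) (σ : Finset W) : ℤ :=
  if h : σ ∈ S then f ⟨σ, h⟩ else 0

theorem supp_ext0 {K : Finset (Finset W)} {n : ℕ} (f : ↥(kfaces K n) → ℤ) :
    Supp K n (ext0 f) := by
  intro σ h
  unfold ext0 at h
  by_cases hσ : σ ∈ kfaces K n
  · exact Finset.mem_filter.1 hσ
  · simp [hσ] at h

theorem bdryZ_eq {K : Finset (Finset W)} {U : Finset W} (hU : ∀ σ ∈ K, σ ⊆ U)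
    (n : ℕ) (f : Finset W → ℤ) (hf : Supp K (n + 1) f) (τ : ↥(kfaces K n)) :
    bdryZ K n (fun σ => f σ) τ = bd stdSign U f τ := by
  obtain ⟨τ, hτ⟩ := τ
  have hτc : τ.card = n := (Finset.mem_filter.1 hτ).2
  unfold bdryZ bd
  simp only [Matrix.mulVecLin_apply, Matrix.mulVec, dotProduct, Matrix.of_apply]
  rw [Finset.sum_coe_sort (kfaces K (n+1))
    (fun σ => (if τ ⊆ σ then coeffInt σ τ else 0) * f σ)]
  symm
  have inS : ∀ v, f (insert v τ) ≠ 0 → insert v τ ∈ kfaces K (n + 1) :=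
    fun v h => Finset.mem_filter.2 (hf _ h)
  refine Finset.sum_bij_ne_zero (fun v _ _ => insert v τ) ?_ ?_ ?_ ?_
  · intro v _ h
    exact inS v (right_ne_zero_of_mul h)
  · intro v hv _ w hw _ hvw
    have : v ∈ insert w τ := hvw ▸ Finset.mem_insert_self v τ
    exact (Finset.mem_insert.1 this).resolve_right (Finset.mem_sdiff.1 hv).2
  · intro σ hσ hne
    have hsub : τ ⊆ σ := by
      by_contra h; simp [h] at hne
    have hσ' := Finset.mem_filter.1 hσ
    have hc : (σ \ τ).card = 1 := by
      rw [Finset.card_sdiff_of_subset hsub]; omega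
    obtain ⟨v, hv⟩ := Finset.card_eq_one.1 hc
    have hvm : v ∈ σ \ τ := by rw [hv]; exact Finset.mem_singleton_self v
    have hvm' := Finset.mem_sdiff.1 hvm
    have e : insert v τ = σ := by
      rw [Finset.insert_eq, ← hv, Finset.sdiff_union_of_subset hsub]
    refine ⟨v, Finset.mem_sdiff.2 ⟨hU σ hσ'.1 hvm'.1, hvm'.2⟩, ?_, e⟩
    rw [← coeffInt_insert τ v hvm'.2, e]
    rw [if_pos hsub] at hne
    exact hne
  · intro v hv _
    rw [if_pos (Finset.subset_insert _ _), coeffInt_insert τ v (Finset.mem_sdiff.1 hv).2]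

theorem ext0_coe {S : Finset (Finset W)} (f : ↥S → ℤ) : (fun σ : ↥S => ext0 f σ) = f := by
  funext σ; unfold ext0; rw [dif_pos σ.2]

theorem trivial_iff {K : Finset (Finset W)} (hK : IsCplx K) {U : Finset W}
    (hU : ∀ σ ∈ K, σ ⊆ U) :
    TrivialRedHomology K ↔ K.Nonempty ∧ ∀ n, Ac stdSign U K n := by
  have hrange : ∀ n (f : ↥(kfaces K n) → ℤ), f ∈ LinearMap.range (bdryZ K n) ↔
      ∃ g, Supp K (n + 1) g ∧ ∀ τ, bd stdSign U g τ = ext0 f τ := by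
    intro n f
    constructor
    · rintro ⟨g, rfl⟩
      refine ⟨ext0 g, supp_ext0 g, fun τ => ?_⟩
      by_cases hτ : τ ∈ kfaces K n
      · rw [← bdryZ_eq hU n (ext0 g) (supp_ext0 g) ⟨τ, hτ⟩, ext0_coe]
        unfold ext0; rw [dif_pos hτ]
      · unfold ext0; rw [dif_neg hτ]
        by_contra h
        exact hτ (Finset.mem_filter.2 ((supp_ext0 g).bd hK stdSign U τ h))
    · rintro ⟨g, hg, h⟩
      refine ⟨fun σ => g σ, ?_⟩
      funext τ
      rw [bdryZ_eq hU n g hg τ, h]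
      exact congrFun (ext0_coe f) τ
  have hker : ∀ n (f : ↥(kfaces K (n + 1)) → ℤ), f ∈ LinearMap.ker (bdryZ K n) ↔
      ∀ τ, bd stdSign U (ext0 f) τ = 0 := by
    intro n f
    rw [LinearMap.mem_ker]
    constructor
    · intro h τ
      by_cases hτ : τ ∈ kfaces K n
      · rw [← bdryZ_eq hU n (ext0 f) (supp_ext0 f) ⟨τ, hτ⟩, ext0_coe, h]; rfl
      · by_contra h'
        exact hτ (Finset.mem_filter.2 ((supp_ext0 f).bd hK stdSign U τ h'))
    · intro h
      funext τ
      have := bdryZ_eq hU n (ext0 f) (supp_ext0 f) τ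
      rw [ext0_coe, h] at this
      exact this
  have hext : ∀ n (f : Finset W → ℤ), Supp K n f →
      ext0 (fun σ : ↥(kfaces K n) => f σ) = f := by
    intro n f hf
    funext σ
    unfold ext0
    by_cases h : σ ∈ kfaces K n
    · rw [dif_pos h]
    · rw [dif_neg h]; by_contra h'
      exact h (Finset.mem_filter.2 (hf σ (Ne.symm h')))
  unfold TrivialRedHomology
  refine and_congr_right fun _ => ?_
  constructor
  · rintro ⟨h0, h1⟩ n f hf hc
    rw [← hext n f hf]
    rw [← hrange]
    cases n with
    | zero => rw [h0]; trivial
    | succ n =>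
      rw [← h1 n, hker, hext _ f hf]; exact hc
  · intro h
    constructor
    · rw [eq_top_iff]
      intro f _
      rw [hrange]
      exact h 0 _ (supp_ext0 f) ((supp_ext0 f).bd_zero stdSign U)
    · intro n
      ext f
      rw [hrange, hker]
      constructor
      · intro hf; exact h (n + 1) _ (supp_ext0 f) hf
      · rintro ⟨g, _, hg⟩ τ
        rw [show ext0 f = bd stdSign U g from (funext hg).symm, bd_bd tour_std]

end Chains
/-! ### Stars of vertex sets in barycentric subdivisions -/

section Combi

/-- `st(S, sd Y)`. -/
abbrev XS (Y : Finset (Finset V)) (S : Finset V) : Finset (Finset (Finset V)) :=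
  starSet (S.image fun v => ({v} : Finset V)) (sd Y)

theorem mem_verts {Y : Finset (Finset V)} (hY : IsCplx Y) (v : V) : v ∈ verts Y ↔ {v} ∈ Y := by
  unfold verts
  rw [Finset.mem_sup]
  constructor
  · rintro ⟨σ, hσ, hv⟩
    exact hY σ hσ _ (Finset.singleton_subset_iff.2 hv)
  · intro h
    exact ⟨_, h, Finset.mem_singleton_self v⟩

theorem mem_XS {Y : Finset (Finset V)} (hY : IsCplx Y) {S : Finset V} (hS : S ⊆ verts Y)
    (c : Finset (Finset V)) : c ∈ XS Y S ↔
      c ⊆ Y ∧ (∀ σ ∈ c, ∀ τ ∈ c, σ ⊆ τ ∨ τ ⊆ σ) ∧ ∃ v ∈ S, ∀ σ ∈ c, v ∈ σ := by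
  have hsd : Y ≠ ∅ → ∀ d, d ∈ sd Y ↔ d ⊆ Y ∧ ∅ ∉ d ∧ ∀ σ ∈ d, ∀ τ ∈ d, σ ⊆ τ ∨ τ ⊆ σ := by
    intro h d
    unfold sd
    rw [if_neg h, Finset.mem_filter, Finset.mem_powerset]
  unfold XS starSet
  rw [Finset.mem_filter]
  constructor
  · rintro ⟨h1, w, hw, h2⟩
    obtain ⟨v, hv, rfl⟩ := Finset.mem_image.1 hw
    have hne : Y ≠ ∅ := by
      rintro rfl; simp [sd] at h1
    rw [hsd hne] at h1 h2
    refine ⟨h1.1, h1.2.2, v, hv, fun σ hσ => ?_⟩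
    rcases h2.2.2 σ (by simp [hσ]) {v} (by simp) with h | h
    · rcases Finset.subset_singleton_iff.1 h with rfl | rfl
      · exact absurd hσ h1.2.1
      · exact Finset.mem_singleton_self v
    · exact Finset.singleton_subset_iff.1 h
  · rintro ⟨h1, h2, v, hv, h3⟩
    have hvY := (mem_verts hY v).1 (hS hv)
    have hne : Y ≠ ∅ := by rintro rfl; simp at hvY
    have he : ∅ ∉ c := fun h => by simpa using h3 _ h
    refine ⟨(hsd hne c).2 ⟨h1, he, h2⟩, {v}, Finset.mem_image_of_mem _ hv, (hsd hne _).2 ⟨?_, ?_, ?_⟩⟩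
    · exact Finset.union_subset h1 (Finset.singleton_subset_iff.2 hvY)
    · simp only [Finset.mem_union, Finset.mem_singleton, not_or]
      exact ⟨he, fun h => by simpa using h.symm⟩
    · intro σ hσ τ hτ
      rw [Finset.mem_union, Finset.mem_singleton] at hσ hτ
      rcases hσ with hσ | rfl <;> rcases hτ with hτ | rfl
      · exact h2 σ hσ τ hτ
      · right; exact Finset.singleton_subset_iff.2 (h3 σ hσ)
      · left; exact Finset.singleton_subset_iff.2 (h3 τ hτ)
      · left; exact subset_rfl

theorem cplx_XS {Y : Finset (Finset V)} (hY : IsCplx Y) {S : Finset V} (hS : S ⊆ verts Y) :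
    IsCplx (XS Y S) := by
  intro c hc d hd
  rw [mem_XS hY hS] at hc ⊢
  obtain ⟨h1, h2, v, hv, h3⟩ := hc
  exact ⟨hd.trans h1, fun σ hσ τ hτ => h2 σ (hd hσ) τ (hd hτ), v, hv, fun σ hσ => h3 σ (hd hσ)⟩

theorem XS_union {Y : Finset (Finset V)} (hY : IsCplx Y) {S : Finset V} {y : V}
    (hS : insert y S ⊆ verts Y) : XS Y (insert y S) = XS Y S ∪ XS Y {y} := by
  have h1 : S ⊆ verts Y := (Finset.subset_insert _ _).trans hS
  have h2 : {y} ⊆ verts Y := Finset.singleton_subset_iff.2 (hS (Finset.mem_insert_self _ _))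
  ext c
  rw [Finset.mem_union, mem_XS hY hS, mem_XS hY h1, mem_XS hY h2]
  constructor
  · rintro ⟨a, b, v, hv, h⟩
    rcases Finset.mem_insert.1 hv with rfl | hv
    · exact Or.inr ⟨a, b, v, Finset.mem_singleton_self _, h⟩
    · exact Or.inl ⟨a, b, v, hv, h⟩
  · rintro (⟨a, b, v, hv, h⟩ | ⟨a, b, v, hv, h⟩)
    · exact ⟨a, b, v, Finset.mem_insert_of_mem hv, h⟩
    · rw [Finset.mem_singleton] at hv; subst hv
      exact ⟨a, b, v, Finset.mem_insert_self _ _, h⟩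

theorem XS_cone {Y : Finset (Finset V)} (hY : IsCplx Y) {y : V} (hy : y ∈ verts Y)
    {s : Finset V → Finset V → ℤ} (hs : Tour s) {U : Finset (Finset V)} (hU : Y ⊆ U) (n : ℕ) :
    Ac s U (XS Y {y}) n := by
  have hyY := (mem_verts hY y).1 hy
  have h2 : {y} ⊆ verts Y := Finset.singleton_subset_iff.2 hy
  refine ac_cone hs (v := {y}) (hU hyY) ?_ n
  intro c hc
  rw [mem_XS hY h2] at hc ⊢
  obtain ⟨a, b, v, hv, h⟩ := hc
  rw [Finset.mem_singleton] at hv; subst hv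
  refine ⟨Finset.insert_subset hyY a, ?_, v, Finset.mem_singleton_self _, ?_⟩
  · intro σ hσ τ hτ
    rw [Finset.mem_insert] at hσ hτ
    rcases hσ with rfl | hσ <;> rcases hτ with rfl | hτ
    · left; exact subset_rfl
    · left; exact Finset.singleton_subset_iff.2 (h τ hτ)
    · right; exact Finset.singleton_subset_iff.2 (h σ hσ)
    · exact b σ hσ τ hτ
  · intro σ hσ
    rcases Finset.mem_insert.1 hσ with rfl | hσ
    · exact Finset.mem_singleton_self _
    · exact h σ hσ

theorem mem_lk {Y : Finset (Finset V)} (y : V) (ρ : Finset V) :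
    ρ ∈ lk {y} Y ↔ y ∉ ρ ∧ insert y ρ ∈ Y := by
  unfold lk
  simp only [Finset.mem_image, Finset.mem_filter, Finset.singleton_subset_iff]
  constructor
  · rintro ⟨τ, ⟨h1, h2⟩, rfl⟩
    refine ⟨by simp, ?_⟩
    rw [Finset.sdiff_singleton_eq_erase, Finset.insert_erase h2]; exact h1
  · rintro ⟨h1, h2⟩
    refine ⟨_, ⟨h2, Finset.mem_insert_self _ _⟩, ?_⟩
    rw [Finset.sdiff_singleton_eq_erase, Finset.erase_insert h1]

theorem cplx_lk {Y : Finset (Finset V)} (hY : IsCplx Y) (y : V) : IsCplx (lk {y} Y) := by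
  intro σ hσ τ hτ
  rw [mem_lk] at hσ ⊢
  exact ⟨fun h => hσ.1 (hτ h), hY _ hσ.2 _ (Finset.insert_subset_insert _ hτ)⟩

theorem pure_lk {Y : Finset (Finset V)} (hY : IsCplx Y) {y : V} (hy : y ∈ verts Y) {k : ℤ}
    (hp : PureDim Y k) : PureDim (lk {y} Y) (k - 1) := by
  have hyY := (mem_verts hY y).1 hy
  refine ⟨⟨∅, (mem_lk y _).2 ⟨by simp, by simpa using hyY⟩⟩, ?_, ?_⟩
  · intro σ hσ
    rw [mem_lk] at hσ
    have := hp.2.1 _ hσ.2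
    rw [Finset.card_insert_of_notMem hσ.1] at this
    push_cast at this; omega
  · intro σ hσ
    rw [mem_lk] at hσ
    obtain ⟨τ, h1, h2, h3⟩ := hp.2.2 _ hσ.2
    have hyt : y ∈ τ := h2 (Finset.mem_insert_self _ _)
    refine ⟨τ.erase y, (mem_lk y _).2 ⟨by simp, by rwa [Finset.insert_erase hyt]⟩, ?_, ?_⟩
    · intro x hx
      rw [Finset.mem_erase]
      exact ⟨by rintro rfl; exact hσ.1 hx, h2 (Finset.mem_insert_of_mem hx)⟩
    · have := Finset.card_erase_add_one hyt
      omega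

theorem starDecV_nonempty {Y : Finset (Finset V)} {S : Finset V} (h : StarDecV Y S) {k : ℤ}
    (hp : PureDim Y k) (hk : 0 ≤ k) : S.Nonempty := by
  cases h with
  | base =>
    exfalso
    obtain ⟨τ, h1, -, h3⟩ := hp.2.2 ∅ (by simp)
    rw [Finset.mem_singleton] at h1; subst h1
    simp at h3; omega
  | step _ _ k' hk' hpure L hne hnd hV horder hlink hlast =>
    obtain ⟨i, hi, rfl⟩ := horder
    refine ⟨L[i], ?_⟩
    rw [List.mem_toFinset, List.drop_eq_getElem_cons hi]
    exact List.mem_cons_self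

/-- Toggling the element `y`. -/
def tog (y : V) : Finset V ≃ Finset V :=
  Function.Involutive.toPerm (fun σ => symmDiff σ {y}) (fun σ => by
    simp [symmDiff_assoc])

theorem mem_tog_self (y : V) (σ : Finset V) : y ∈ tog y σ ↔ y ∉ σ := by
  change y ∈ symmDiff σ {y} ↔ _
  simp [Finset.mem_symmDiff]

theorem mem_tog (y x : V) (h : x ≠ y) (σ : Finset V) : x ∈ tog y σ ↔ x ∈ σ := by
  change x ∈ symmDiff σ {y} ↔ _
  simp [Finset.mem_symmDiff, h]

theorem insert_tog (y : V) (σ : Finset V) (h : y ∈ σ) : insert y (tog y σ) = σ := by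
  ext x
  by_cases hx : x = y
  · subst hx; simp [h]
  · simp [hx, mem_tog y x hx]

theorem tog_mem_lk {Y : Finset (Finset V)} (y : V) (σ : Finset V) :
    tog y σ ∈ lk {y} Y ↔ y ∈ σ ∧ σ ∈ Y := by
  rw [mem_lk, mem_tog_self, not_not]
  refine and_congr_right fun h => ?_
  rw [insert_tog y σ h]

/-- The overlap is isomorphic to the star in the link. -/
theorem overlap_iff {Y : Finset (Finset V)} (hY : IsCplx Y) {S : Finset V} {y : V}
    (hS : S ⊆ verts Y) (hy : y ∈ verts Y) (hyS : y ∉ S)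
    (hT : (verts (lk {y} Y) ∩ S).Nonempty) (c : Finset (Finset V)) :
    c ∈ XS Y S ∩ XS Y {y} ↔
      c.map (tog y).toEmbedding ∈ XS (lk {y} Y) (verts (lk {y} Y) ∩ S) := by
  have h2 : {y} ⊆ verts Y := Finset.singleton_subset_iff.2 hy
  rw [Finset.mem_inter, mem_XS hY hS, mem_XS hY h2,
    mem_XS (cplx_lk hY y) Finset.inter_subset_left]
  constructor
  · rintro ⟨⟨a, b, v, hv, h⟩, -, -, w, hw, h'⟩
    rw [Finset.mem_singleton] at hw; subst hw
    have hvw : v ≠ w := by rintro rfl; exact hyS hv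
    refine ⟨?_, ?_, ?_⟩
    · intro ρ hρ
      obtain ⟨σ, hσ, rfl⟩ := Finset.mem_map.1 hρ
      exact (tog_mem_lk w σ).2 ⟨h' σ hσ, a hσ⟩
    · intro ρ hρ ρ' hρ'
      obtain ⟨σ, hσ, rfl⟩ := Finset.mem_map.1 hρ
      obtain ⟨σ', hσ', rfl⟩ := Finset.mem_map.1 hρ'
      have key : ∀ α ∈ c, ∀ β, α ⊆ β → tog w α ⊆ tog w β := by
        intro α hα β hαβ x hx
        have hxw : x ≠ w := by
          rintro rfl; exact (mem_tog_self x α).1 hx (h' α hα)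
        rw [mem_tog w x hxw] at hx ⊢
        exact hαβ hx
      rcases b σ hσ σ' hσ' with hh | hh
      · left; exact key _ hσ _ hh
      · right; exact key _ hσ' _ hh
    · rcases c.eq_empty_or_nonempty with rfl | ⟨σ, hσ⟩
      · obtain ⟨t, ht⟩ := hT
        exact ⟨t, ht, by simp⟩
      · refine ⟨v, Finset.mem_inter.2 ⟨?_, hv⟩, ?_⟩
        · rw [mem_verts (cplx_lk hY w)]
          refine cplx_lk hY w _ ((tog_mem_lk w σ).2 ⟨h' σ hσ, a hσ⟩) _ ?_
          rw [Finset.singleton_subset_iff, mem_tog w v hvw]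
          exact h σ hσ
        · intro ρ hρ
          obtain ⟨σ, hσ, rfl⟩ := Finset.mem_map.1 hρ
          exact (mem_tog w v hvw σ).2 (h σ hσ)
  · rintro ⟨a, b, v, hv, h⟩
    have hvS := (Finset.mem_inter.1 hv).2
    have hvy : v ≠ y := by rintro rfl; exact hyS hvS
    have hm : ∀ σ ∈ c, tog y σ ∈ c.map (tog y).toEmbedding :=
      fun σ hσ => Finset.mem_map_of_mem (tog y).toEmbedding hσ
    have a' : ∀ σ ∈ c, y ∈ σ ∧ σ ∈ Y := fun σ hσ => (tog_mem_lk y σ).1 (a (hm σ hσ))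
    have b' : ∀ σ ∈ c, ∀ τ ∈ c, σ ⊆ τ ∨ τ ⊆ σ := by
      intro σ hσ τ hτ
      rw [← insert_tog y σ (a' σ hσ).1, ← insert_tog y τ (a' τ hτ).1]
      rcases b _ (hm σ hσ) _ (hm τ hτ) with hh | hh
      · left; exact Finset.insert_subset_insert _ hh
      · right; exact Finset.insert_subset_insert _ hh
    refine ⟨⟨fun σ hσ => (a' σ hσ).2, b', v, hvS, fun σ hσ => ?_⟩,
      fun σ hσ => (a' σ hσ).2, b', y, Finset.mem_singleton_self _, fun σ hσ => (a' σ hσ).1⟩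
    exact (mem_tog y v hvy σ).1 (h _ (hm σ hσ))

theorem map_tog_tog (y : V) (U : Finset (Finset V)) :
    (U.map (tog y).toEmbedding).map (tog y).toEmbedding = U := by
  rw [Finset.map_map]
  convert Finset.map_refl
  ext1 σ
  exact (tog y).apply_symm_apply σ

theorem tog_tog (y : V) (σ : Finset V) : tog y (tog y σ) = σ := (tog y).apply_symm_apply σ

theorem lk_subset_map {Y U : Finset (Finset V)} (hU : Y ⊆ U) (y : V) :
    lk {y} Y ⊆ U.map (tog y).toEmbedding := by
  intro ρ hρ
  rw [← tog_tog y ρ, tog_mem_lk] at hρ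
  rw [Finset.mem_map]
  exact ⟨tog y ρ, hU hρ.2, tog_tog y ρ⟩

theorem tour_comp {s : Finset V → Finset V → ℤ} (hs : Tour s) (e : Finset V ≃ Finset V) :
    Tour (fun u v => s (e u) (e v)) :=
  ⟨fun _ _ => hs.1 _ _, fun _ _ h => hs.2 _ _ (fun h' => h (e.injective h'))⟩

/-- The overlap has small dimension. -/
theorem overlap_card {Y : Finset (Finset V)} (hY : IsCplx Y) {S : Finset V} {y : V}
    (hS : S ⊆ verts Y) (hy : y ∈ verts Y) (hyS : y ∉ S) {k : ℕ}
    (hk : ∀ σ ∈ Y, σ.card ≤ k + 1) {c : Finset (Finset V)}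
    (hc : c ∈ XS Y S ∩ XS Y {y}) : c.card ≤ k := by
  have h2 : {y} ⊆ verts Y := Finset.singleton_subset_iff.2 hy
  rw [Finset.mem_inter, mem_XS hY hS, mem_XS hY h2] at hc
  obtain ⟨⟨a, b, v, hv, h⟩, -, -, w, hw, h'⟩ := hc
  rw [Finset.mem_singleton] at hw; subst hw
  have hvw : v ≠ w := by rintro rfl; exact hyS hv
  have : c.card ≤ (Finset.Icc 2 (k + 1)).card := by
    refine Finset.card_le_card_of_injOn Finset.card ?_ ?_
    · intro σ hσ
      have hσ : σ ∈ c := hσ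
      simp only [Finset.coe_Icc, Set.mem_Icc]
      refine ⟨?_, hk σ (a hσ)⟩
      exact Finset.one_lt_card.2 ⟨v, h σ hσ, w, h' σ hσ, hvw⟩
    · intro σ hσ τ hτ hst
      rcases b σ hσ τ hτ with hh | hh
      · exact Finset.eq_of_subset_of_card_le hh hst.ge
      · exact (Finset.eq_of_subset_of_card_le hh hst.le).symm
  simpa using this

/-- Low-degree vanishing for one complex, assuming it for the links. -/
theorem low_step {Y : Finset (Finset V)} (hY : IsCplx Y) {k : ℤ} (hp : PureDim Y k)
    {L : List V} (hnd : L.Nodup) (hV : L.toFinset = verts Y)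
    (hlink : ∀ i, (hi : i + 1 < L.length) →
        StarDecV (lk {L.get ⟨i, Nat.lt_of_succ_lt hi⟩} Y)
          (verts (lk {L.get ⟨i, Nat.lt_of_succ_lt hi⟩} Y) ∩ (L.drop (i + 1)).toFinset))
    (hac : ∀ i, (hi : i + 1 < L.length) → ∀ (n : ℕ), (n : ℤ) ≤ k - 1 →
      ∀ s, Tour s → ∀ U, lk {L.get ⟨i, Nat.lt_of_succ_lt hi⟩} Y ⊆ U →
        Ac s U (XS (lk {L.get ⟨i, Nat.lt_of_succ_lt hi⟩} Y)
          (verts (lk {L.get ⟨i, Nat.lt_of_succ_lt hi⟩} Y) ∩ (L.drop (i + 1)).toFinset)) n)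
    (n : ℕ) (hn : (n : ℤ) ≤ k) {s : Finset V → Finset V → ℤ} (hs : Tour s)
    {U : Finset (Finset V)} (hU : Y ⊆ U) (m : ℕ) :
    ∀ j, j + 1 + m = L.length → Ac s U (XS Y (L.drop j).toFinset) n := by
  induction m with
  | zero =>
    intro j hj
    have hjl : j < L.length := by omega
    rw [List.drop_eq_getElem_cons hjl, List.drop_of_length_le (by omega)]
    simp only [List.toFinset_cons, List.toFinset_nil, insert_empty_eq]
    exact XS_cone hY (by rw [← hV]; simp) hs hU n
  | succ m ih =>
    intro j hj
    have hjl : j < L.length := by omega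
    have hdV : ∀ i, (L.drop i).toFinset ⊆ verts Y := by
      intro i x hx
      rw [← hV]
      rw [List.mem_toFinset] at hx ⊢
      exact List.mem_of_mem_drop hx
    have hyV : L[j] ∈ verts Y := by rw [← hV]; simp
    have hyS : L[j] ∉ (L.drop (j + 1)).toFinset := by
      have := hnd.sublist (List.drop_sublist j L)
      rw [List.drop_eq_getElem_cons hjl, List.nodup_cons] at this
      rw [List.mem_toFinset]; exact this.1
    have h1 := ih (j + 1) (by omega)
    have hdj := hdV j
    rw [List.drop_eq_getElem_cons hjl, List.toFinset_cons] at hdj ⊢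
    rw [XS_union hY hdj]
    refine mv1 hs (cplx_XS hY (hdV _)) (cplx_XS hY (Finset.singleton_subset_iff.2 hyV)) h1
      (XS_cone hY hyV hs hU n) ?_
    intro n' hn'
    have hT := starDecV_nonempty (hlink j (by omega)) (pure_lk hY hyV hp) (by omega)
    have hA := hac j (by omega) n' (by omega) (fun u v => s (tog L[j] u) (tog L[j] v))
      (tour_comp hs _) (U.map (tog L[j]).toEmbedding) (lk_subset_map hU _)
    have := ac_transport (tog L[j]) (K' := XS Y (L.drop (j + 1)).toFinset ∩ XS Y {L[j]}) (s := s) ?_ hA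
    · rwa [map_tog_tog] at this
    · intro c
      rw [overlap_iff hY (hdV _) hyV hyS hT, map_tog_tog]
      rfl

theorem low {Y : Finset (Finset V)} {S : Finset V} (h : StarDecV Y S) :
    IsCplx Y → ∀ k : ℤ, PureDim Y k → ∀ n : ℕ, (n : ℤ) ≤ k →
      ∀ s, Tour s → ∀ U, Y ⊆ U → Ac s U (XS Y S) n := by
  induction h with
  | base =>
    intro _ k hp n hn
    exfalso
    obtain ⟨τ, h1, -, h3⟩ := hp.2.2 ∅ (by simp)
    rw [Finset.mem_singleton] at h1; subst h1
    simp at h3; omega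
  | step Y S k' hk' hpure L hne hnd hV horder hlink hlast ih _ =>
    intro hY k hp n hn s hs U hU
    obtain ⟨i, hi, rfl⟩ := horder
    refine low_step hY hp hnd hV hlink ?_ n hn hs hU (L.length - (i + 1)) i (by omega)
    intro i hi n hn s hs U hU
    refine ih i hi (cplx_lk hY _) (k - 1) (pure_lk hY ?_ hp) n hn s hs U hU
    rw [← hV]; simp

end Combi

/-- If `≺` (encoded by `L`) induces a star decomposition of
`(sd Y, Y₀)` in vertices and `st(Y₀, sd Y)` has trivial reduced homology, then for every
`y ∈ Y₀` other than the `≺`-largest vertex, `st(V(lk({y},Y))_{≻y}, sd lk({y},Y))` has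
trivial reduced homology as well. -/
theorem homology_link_property {V : Type*} [DecidableEq V] (Y : Finset (Finset V))
    (hY : IsCplx Y) (dY : ℤ) (hpY : PureDim Y dY) (Y₀ : Finset V) (hY₀ : Y₀ ⊆ verts Y)
    (L : List V) (hL : InducesStarDecompV L Y Y₀)
    (hhom : TrivialRedHomology (starSet (Y₀.image fun v => ({v} : Finset V)) (sd Y))) :
    ∀ i, (hi : i + 1 < L.length) → L.get ⟨i, by omega⟩ ∈ Y₀ →
      TrivialRedHomology (starSet
        (((verts (lk {L.get ⟨i, by omega⟩} Y) ∩ (L.drop (i + 1)).toFinset)).image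
          fun v => ({v} : Finset V))
        (sd (lk {L.get ⟨i, by omega⟩} Y))) := by
  rcases hL with ⟨rfl, -, -⟩ | ⟨hne, hnd, hV, ⟨i₀, hi₀, hY₀eq⟩, hlink, -⟩
  · intro i hi; simp at hi
  intro i hi hmem
  have hdV : ∀ i, (L.drop i).toFinset ⊆ verts Y := by
    intro i x hx
    rw [← hV]
    rw [List.mem_toFinset] at hx ⊢
    exact List.mem_of_mem_drop hx
  have hyV : ∀ j, (hj : j < L.length) → L[j] ∈ verts Y := by
    intro j hj; rw [← hV]; simp
  have hyS : ∀ j, (hj : j < L.length) → L[j] ∉ (L.drop (j + 1)).toFinset := by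
    intro j hj
    have := hnd.sublist (List.drop_sublist j L)
    rw [List.drop_eq_getElem_cons hj, List.nodup_cons] at this
    rw [List.mem_toFinset]; exact this.1
  have hi₀i : i₀ ≤ i := by
    rw [hY₀eq, List.mem_toFinset, List.mem_drop_iff_getElem] at hmem
    obtain ⟨j, hj, hji⟩ := hmem
    have := (List.Nodup.getElem_inj_iff hnd).1 hji
    omega
  have hXU : ∀ S, S ⊆ verts Y → ∀ c ∈ XS Y S, c ⊆ Y := fun S hS c hc => ((mem_XS hY hS c).1 hc).1
  -- the dimension is nonnegative
  have hd0 : 0 ≤ dY := by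
    have h1 := (mem_verts hY _).1 (hyV i (by omega))
    have := hpY.2.1 _ h1
    simp at this; omega
  obtain ⟨k, rfl⟩ := Int.eq_ofNat_of_zero_le hd0
  have hkc : ∀ σ ∈ Y, σ.card ≤ k + 1 := fun σ hσ => by exact_mod_cast hpY.2.1 σ hσ
  have hlow : ∀ j, j < L.length → ∀ n ≤ k, Ac stdSign Y (XS Y (L.drop j).toFinset) n := by
    intro j hj n hn
    refine low_step hY hpY hnd hV hlink ?_ n (by exact_mod_cast hn) tour_std subset_rfl
      (L.length - (j + 1)) j (by omega)
    intro i hi n hn s hs U hU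
    exact low (hlink i hi) (cplx_lk hY _) _ (pure_lk hY (hyV i (by omega)) hpY) n hn s hs U hU
  have hdrop : ∀ j, (hj : j < L.length) → XS Y (L.drop j).toFinset =
      XS Y (L.drop (j + 1)).toFinset ∪ XS Y {L[j]} := by
    intro j hj
    have := hdV j
    rw [List.drop_eq_getElem_cons hj, List.toFinset_cons] at this ⊢
    exact XS_union hY this
  have hall : ∀ m, i₀ + m < L.length → ∀ n, Ac stdSign Y (XS Y (L.drop (i₀ + m)).toFinset) n := by
    intro m
    induction m with
    | zero =>
      intro hm
      rw [hY₀eq] at hhom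
      exact ((trivial_iff (cplx_XS hY (hdV _)) (hXU _ (hdV _))).1 hhom).2
    | succ m ih =>
      intro hm n
      by_cases hn : n ≤ k
      · exact hlow _ hm n hn
      · have h := ih (by omega) n
        rw [hdrop _ (by omega)] at h
        refine mv3 (cplx_XS hY (hdV _))
          (cplx_XS hY (Finset.singleton_subset_iff.2 (hyV (i₀ + m) (by omega)))) ?_ h
        intro c hc
        have := overlap_card hY (hdV _) (hyV (i₀ + m) (by omega)) (hyS _ (by omega)) hkc hc
        omega
  have hil : i < L.length := by omega
  have hX1 : ∀ n, Ac stdSign Y (XS Y (L.drop i).toFinset) n := by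
    obtain ⟨m, rfl⟩ := Nat.exists_eq_add_of_le hi₀i
    exact hall m hil
  have hX2 : ∀ n, Ac stdSign Y (XS Y (L.drop (i + 1)).toFinset) n := by
    obtain ⟨m, rfl⟩ := Nat.exists_eq_add_of_le hi₀i
    exact hall (m + 1) hi
  have hyc : {L[i]} ⊆ verts Y := Finset.singleton_subset_iff.2 (hyV i hil)
  have hO : ∀ n, Ac stdSign Y (XS Y (L.drop (i + 1)).toFinset ∩ XS Y {L[i]}) n := by
    intro n
    have h := hX1 (n + 1)
    rw [hdrop i hil] at h
    exact mv2 tour_std (cplx_XS hY (hdV _)) (cplx_XS hY hyc) (hX2 n)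
      (XS_cone hY (hyV i hil) tour_std subset_rfl n) h
  change TrivialRedHomology (XS (lk {L[i]} Y) (verts (lk {L[i]} Y) ∩ (L.drop (i + 1)).toFinset))
  -- the overlap contains a vertex
  have hT : (verts (lk {L[i]} Y) ∩ (L.drop (i + 1)).toFinset).Nonempty := by
    have hemp : (∅ : Finset (Finset V)) ∈ XS Y (L.drop (i + 1)).toFinset ∩ XS Y {L[i]} := by
      rw [Finset.mem_inter, mem_XS hY (hdV _), mem_XS hY hyc]
      refine ⟨⟨by simp, by simp, L[i + 1], ?_, by simp⟩, by simp, by simp, L[i], by simp, by simp⟩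
      rw [List.mem_toFinset, List.drop_eq_getElem_cons hi]
      exact List.mem_cons_self
    have hsup : Supp (XS Y (L.drop (i + 1)).toFinset ∩ XS Y {L[i]}) 0
        (fun c => if c = ∅ then 1 else 0) := by
      intro c hc
      by_cases h : c = ∅
      · subst h; exact ⟨hemp, rfl⟩
      · simp [h] at hc
    obtain ⟨g, hg, hgb⟩ := hO 0 _ hsup (hsup.bd_zero _ _)
    have h1 : bd stdSign Y g ∅ ≠ 0 := by rw [hgb]; simp
    obtain ⟨σ, -, hσ⟩ := Finset.exists_ne_zero_of_sum_ne_zero h1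
    have hm := (hg _ (right_ne_zero_of_mul hσ)).1
    rw [Finset.mem_inter, mem_XS hY (hdV _), mem_XS hY hyc] at hm
    obtain ⟨⟨a, -, v, hv, h⟩, -, -, w, hw, h'⟩ := hm
    rw [Finset.mem_singleton] at hw; subst hw
    have hσY := a (Finset.mem_insert_self _ _)
    have hvσ := h _ (Finset.mem_insert_self _ _)
    have hwσ := h' _ (Finset.mem_insert_self _ _)
    refine ⟨v, Finset.mem_inter.2 ⟨?_, hv⟩⟩
    rw [mem_verts (cplx_lk hY _), mem_lk]
    constructor
    · rw [Finset.mem_singleton]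
      intro h0; rw [← h0] at hv; exact hyS i hil hv
    · exact hY _ hσY _ (by
        intro x hx
        simp only [Finset.mem_insert, Finset.mem_singleton] at hx
        rcases hx with rfl | rfl <;> assumption)
  have hclk := cplx_lk hY L[i]
  have hsub : verts (lk {L[i]} Y) ∩ (L.drop (i + 1)).toFinset ⊆ verts (lk {L[i]} Y) :=
    Finset.inter_subset_left
  rw [trivial_iff (U := Y.map (tog L[i]).toEmbedding) (cplx_XS hclk hsub)
    (fun c hc => ((mem_XS hclk hsub c).1 hc).1.trans (lk_subset_map subset_rfl _))]
  constructor
  · refine ⟨∅, (mem_XS hclk hsub _).2 ⟨by simp, by simp, ?_⟩⟩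
    obtain ⟨t, ht⟩ := hT
    exact ⟨t, ht, by simp⟩
  · intro n
    refine ac_transport (tog L[i]) (overlap_iff hY (hdV _) (hyV i hil) (hyS i hil) hT) ?_
    exact ac_change tour_std (tour_comp tour_std _) (hO n)

end Paper
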